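/- Let p be a polynomial with real coefficients of degree at most 10 satisfying: p(t) = p(−6−t) for all real t; p(−1) = p(−2) = p(−3) = 0; p(0) = 1; p(1) = 10; and p(2) = 58. Then the coefficient of X^10 in p equals 6/10! = 1/604800. -/

import Mathlib

open Polynomial

/-- The Hilbert polynomial computation for `c₁(Ξ)^10` on `M₂`: a real polynomial of
degree at most 10 with the Serre-duality symmetry `p(t) = p(-6-t)`, vanishing at
`-1, -2, -3`, and with `p(0) = 1`, `p(1) = 10`, `p(2) = 58` has leading coefficient
(coefficient of `X^10`) equal to `6/10! = 1/604800`. -/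
theorem hilbert_poly_leading_coeff
    (p : Polynomial ℝ) (hdeg : p.natDegree ≤ 10)
    (hsym : ∀ t : ℝ, p.eval t = p.eval (-6 - t))
    (hm1 : p.eval (-1) = 0) (hm2 : p.eval (-2) = 0) (hm3 : p.eval (-3) = 0)
    (h0 : p.eval 0 = 1) (h1 : p.eval 1 = 10) (h2 : p.eval 2 = 58) :
    p.coeff 10 = 6 / (Nat.factorial 10 : ℝ) := by
  -- tenth finite difference over the nodes -8, ..., 2
  have e0 := hsym 0
  have e1 := hsym 1
  have e2 := hsym 2
  have e3 := hsym (-1)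
  have e4 := hsym (-2)
  rw [h0] at e0
  rw [h1] at e1
  rw [h2] at e2
  rw [hm1] at e3
  rw [hm2] at e4
  have key : ∀ t : ℝ, p.eval t = ∑ i ∈ Finset.range 11, p.coeff i * t ^ i :=
    fun t => Polynomial.eval_eq_sum_range' (by omega) t
  rw [key] at hm1 hm2 hm3 h0 h1 h2 e0 e1 e2 e3 e4
  simp only [Finset.sum_range_succ, Finset.sum_range_zero] at hm1 hm2 hm3 h0 h1 h2 e0 e1 e2 e3 e4
  norm_num [Nat.factorial] at hm1 hm2 hm3 h0 h1 h2 e0 e1 e2 e3 e4 ⊢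
  linarith
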